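/- Let D′ ⋐ D ⊂ ℝ^{2n+1} be bounded open sets and let k ≥ 0 and s = k + n + 2. Then there exists a constant C > 0 such that for every smooth function f : cl(D) → ℝ^m and every multi-index I with entries in {1,…,2n} and |I| ≤ k, one has sup_{x ∈ cl(D′)} |X_I f(x)| ≤ C ‖f‖_{D,s}. -/

import Mathlib

open MeasureTheory Bornology

noncomputable section

variable {E : Type*} [NormedAddCommGroup E] [NormedSpace ℝ E]

/-- The standard contact form `η₀ = dx^{2n+1} - Σ x^{n+j} dx^j` on `ℝ^{2n+1}`
(0-indexed coordinates): `η₀(x)(v) = v_{2n} - Σ_{j<n} x_{n+j} v_j`. -/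
def eta0 (n : ℕ) (x v : Fin (2*n+1) → ℝ) : ℝ :=
  v ⟨2*n, by omega⟩ -
    ∑ j : Fin n, x ⟨n + j, by have := j.2; omega⟩ * v ⟨j, by have := j.2; omega⟩

/-- `dη₀ = Σ_{j<n} dx^j ∧ dx^{n+j}`. -/
def dEta0 (n : ℕ) (u v : Fin (2*n+1) → ℝ) : ℝ :=
  ∑ j : Fin n,
    (u ⟨j, by have := j.2; omega⟩ * v ⟨n + j, by have := j.2; omega⟩ -
     u ⟨n + j, by have := j.2; omega⟩ * v ⟨j, by have := j.2; omega⟩)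

/-- The horizontal vector fields: for `j < n`, `X_j = ∂_j + x_{n+j} ∂_{2n}`;
for `n ≤ j < 2n`, `X_j = ∂_j` (0-indexed). -/
def Xvec (n : ℕ) (j : Fin (2*n)) (x : Fin (2*n+1) → ℝ) : Fin (2*n+1) → ℝ :=
  if h : (j : ℕ) < n then
    (Pi.single (⟨j, by omega⟩ : Fin (2*n+1)) 1 : Fin (2*n+1) → ℝ)
      + x ⟨n + j, by omega⟩ • (Pi.single (⟨2*n, by omega⟩ : Fin (2*n+1)) 1 : Fin (2*n+1) → ℝ)
  else
    (Pi.single (⟨j, by have := j.2; omega⟩ : Fin (2*n+1)) 1 : Fin (2*n+1) → ℝ)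

/-- The horizontal derivative `X_j f`. -/
def hDeriv (n : ℕ) (j : Fin (2*n)) (f : (Fin (2*n+1) → ℝ) → E)
    (x : Fin (2*n+1) → ℝ) : E :=
  fderiv ℝ f x (Xvec n j x)

/-- Iterated horizontal derivative `X_I f = X_{i₁} ⋯ X_{i_t} f`. -/
def XI (n : ℕ) : List (Fin (2*n)) → ((Fin (2*n+1) → ℝ) → E) → ((Fin (2*n+1) → ℝ) → E)
  | [], f => f
  | j :: I, f => hDeriv n j (XI n I f)

/-- Squared Folland–Stein norm `‖f‖_{D,s}² = Σ_{|I| ≤ s} ∫_D ‖X_I f‖²`. -/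
def fsNormSq (n : ℕ) (D : Set (Fin (2*n+1) → ℝ)) (s : ℕ)
    (f : (Fin (2*n+1) → ℝ) → E) : ℝ :=
  ∑ t ∈ Finset.range (s+1), ∑ I : Fin t → Fin (2*n),
    ∫ x in D, ‖XI n (List.ofFn I) f x‖^2

/-- The Folland–Stein norm `‖f‖_{D,s}`. -/
def fsNorm (n : ℕ) (D : Set (Fin (2*n+1) → ℝ)) (s : ℕ)
    (f : (Fin (2*n+1) → ℝ) → E) : ℝ :=
  Real.sqrt (fsNormSq n D s f)

/-- Ordinary partial derivative `∂_i f`. -/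
def pDeriv (n : ℕ) (i : Fin (2*n+1)) (f : (Fin (2*n+1) → ℝ) → E)
    (x : Fin (2*n+1) → ℝ) : E :=
  fderiv ℝ f x (Pi.single i 1 : Fin (2*n+1) → ℝ)

/-- Iterated ordinary partial derivative. -/
def pI (n : ℕ) : List (Fin (2*n+1)) → ((Fin (2*n+1) → ℝ) → E) → ((Fin (2*n+1) → ℝ) → E)
  | [], f => f
  | i :: I, f => pDeriv n i (pI n I f)

/-- The Reeb derivative `T₀ f = ∂_{2n} f` (0-indexed). -/
def T0Deriv (n : ℕ) (f : (Fin (2*n+1) → ℝ) → E) (x : Fin (2*n+1) → ℝ) : E :=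
  fderiv ℝ f x (Pi.single (⟨2*n, by omega⟩ : Fin (2*n+1)) 1 : Fin (2*n+1) → ℝ)

/-- `X` is a contact vector field on `D`:  `dη₀(X, X_j) + X_j(η₀(X)) = 0` for all
horizontal `X_j`. -/
def IsContactVF (n : ℕ) (D : Set (Fin (2*n+1) → ℝ))
    (X : (Fin (2*n+1) → ℝ) → (Fin (2*n+1) → ℝ)) : Prop :=
  ∀ j : Fin (2*n), ∀ x ∈ D,
    dEta0 n (X x) (Xvec n j x) + hDeriv n j (fun y => eta0 n y (X y)) x = 0

/-- The contact vector field with generating function `g`: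
`X_g = g T₀ + Σ_j (-(X_{n+j} g) X_j + (X_j g) X_{n+j})`. -/
def genVF (n : ℕ) (g : (Fin (2*n+1) → ℝ) → ℝ) (x : Fin (2*n+1) → ℝ) :
    Fin (2*n+1) → ℝ :=
  g x • (Pi.single (⟨2*n, by omega⟩ : Fin (2*n+1)) 1 : Fin (2*n+1) → ℝ)
  + ∑ j : Fin n,
      (-(hDeriv n (⟨n + j, by have := j.2; omega⟩ : Fin (2*n)) g x) •
          Xvec n (⟨j, by have := j.2; omega⟩ : Fin (2*n)) x
        + (hDeriv n (⟨j, by have := j.2; omega⟩ : Fin (2*n)) g x) •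
          Xvec n (⟨n + j, by have := j.2; omega⟩ : Fin (2*n)) x)

/-!
Average `g` over the points `x · δ_t(y)` of the Heisenberg group, `y` in the unit ball, against a
bump function; the value at `t = 0` is `g x`. The velocity of `t ↦ x · δ_t(y)` is horizontal up to
`t` times a multiple of the Reeb field `T = [X_{n+i}, X_i]`, and integrating one of the two
horizontal derivatives in `T g` by parts cancels this factor `t`. So each `t`-derivative of the
average of `g` is a sum of averages of the `X_j g` against new weights, without loss in `t`.

By the Cauchy–Schwarz inequality and the Jacobian `t^{2n+2}` of `δ_t`, an average at scale `t` is at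
most `t^{-(n+1)}` times an `L²` norm. In Taylor's formula for the value at `0`, expanded at `t = r`
with remainder of order `n + 2`, the integrand of the remainder carries the factor `t^{n+1}`, which
exactly compensates this singularity; hence `n + 2` horizontal derivatives in `L²` bound `g x`.
-/

open Set Filter Topology Metric Function
open scoped ContDiff Manifold

/-- The coordinate space `ℝ^{2n+1}` of the contact form `η₀`, seen as the Heisenberg group. -/
abbrev Heis (n : ℕ) := Fin (2 * n + 1) → ℝ

/-- The Reeb vector field `∂/∂x^{2n+1}`, which is constant. -/
def reeb (n : ℕ) : Heis n := Pi.single (Fin.last (2 * n)) 1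

/-- The last coordinate `x^{2n+1}`. -/
def vert (n : ℕ) : Heis n →L[ℝ] ℝ := ContinuousLinearMap.proj (Fin.last (2 * n))

/-- The coefficient of the Reeb field in `X_j`: it is `x^{n+j}` for `j < n` and `0` otherwise. -/
def reebCoeff (n : ℕ) (j : Fin (2 * n)) : Heis n →L[ℝ] ℝ :=
  if h : (j : ℕ) < n then ContinuousLinearMap.proj (⟨n + j, by omega⟩ : Fin (2 * n + 1)) else 0

section Geometry

variable {n : ℕ}

/-- The Liouville form `Σ_{j<n} x^{n+j} dx^j` at the point `x`, so that `η₀ = dx^{2n+1} - λ`. -/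
def liouville (x : Heis n) : Heis n →L[ℝ] ℝ :=
  ∑ j : Fin (2 * n), reebCoeff n j x • ContinuousLinearMap.proj j.castSucc

/-- The linear part of the left translation by `x` in the Heisenberg group. -/
def leftMulLinear (x : Heis n) : Heis n →L[ℝ] Heis n :=
  ContinuousLinearMap.id ℝ (Heis n) + (liouville x).smulRight (reeb n)

/-- The Heisenberg group law, in the coordinates in which the fields `X_j` are left invariant. -/
def heisMul (x y : Heis n) : Heis n := x + leftMulLinear x y

/-- The parabolic dilation, acting by `t` on the first `2n` coordinates and by `t²` on the last. -/
def heisDilation (t : ℝ) : Heis n →L[ℝ] Heis n :=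
  t • (ContinuousLinearMap.id ℝ (Heis n) + ((t - 1) • vert n).smulRight (reeb n))

/-- The function `2 x^{2n+1} - λ_x(x)`; `t` times it is the Reeb component of the velocity of the
curve `t ↦ δ_t x`. -/
def dilationReebSpeed (x : Heis n) : ℝ := 2 * vert n x - liouville x x

theorem Xvec_eq (j : Fin (2 * n)) (x : Heis n) :
    Xvec n j x = Pi.single j.castSucc 1 + reebCoeff n j x • reeb n := by
  unfold Xvec reebCoeff
  split_ifs with h
  · rfl
  · rw [zero_apply, zero_smul, add_zero]
    rfl

theorem liouville_apply (x y : Heis n) :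
    liouville x y = ∑ j : Fin (2 * n), reebCoeff n j x * y j.castSucc := by
  simp [liouville]

theorem leftMulLinear_apply (x y : Heis n) :
    leftMulLinear x y = y + liouville x y • reeb n := by
  simp [leftMulLinear]

theorem heisDilation_apply (t : ℝ) (y : Heis n) :
    heisDilation t y = t • y + (t * (t - 1) * vert n y) • reeb n := by
  simp [heisDilation, smul_smul, mul_assoc]

theorem vert_reeb : vert n (reeb n) = 1 := by
  simp [vert, reeb]

theorem vert_single_castSucc (j : Fin (2 * n)) : vert n (Pi.single j.castSucc 1) = 0 := by
  simp [vert, (Fin.castSucc_lt_last j).ne']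

theorem reebCoeff_reeb (j : Fin (2 * n)) : reebCoeff n j (reeb n) = 0 := by
  unfold reebCoeff reeb
  split_ifs with h
  · exact Pi.single_eq_of_ne (by simp [Fin.ext_iff]; omega) 1
  · rfl

theorem liouville_reeb (x : Heis n) : liouville x (reeb n) = 0 := by
  simp [liouville_apply, reeb, (Fin.castSucc_lt_last _).ne]

theorem liouville_single_castSucc (x : Heis n) (j : Fin (2 * n)) :
    liouville x (Pi.single j.castSucc 1) = reebCoeff n j x := by
  simp [liouville_apply, Pi.single_apply]

theorem leftMulLinear_reeb (x : Heis n) : leftMulLinear x (reeb n) = reeb n := by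
  simp [leftMulLinear_apply, liouville_reeb]

theorem reebCoeff_heisMul (j : Fin (2 * n)) (x y : Heis n) :
    reebCoeff n j (heisMul x y) = reebCoeff n j x + reebCoeff n j y := by
  simp [heisMul, leftMulLinear_apply, reebCoeff_reeb]

theorem reebCoeff_heisDilation (j : Fin (2 * n)) (t : ℝ) (y : Heis n) :
    reebCoeff n j (heisDilation t y) = t * reebCoeff n j y := by
  simp [heisDilation_apply, reebCoeff_reeb]

theorem leftMulLinear_Xvec (j : Fin (2 * n)) (x y : Heis n) :
    leftMulLinear x (Xvec n j y) = Xvec n j (heisMul x y) := by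
  rw [leftMulLinear_apply, Xvec_eq, Xvec_eq, reebCoeff_heisMul, map_add, map_smul, liouville_reeb,
    liouville_single_castSucc]
  module

theorem heisDilation_Xvec (j : Fin (2 * n)) (t : ℝ) (y : Heis n) :
    heisDilation t (Xvec n j y) = t • Xvec n j (heisDilation t y) := by
  rw [heisDilation_apply, Xvec_eq, Xvec_eq, reebCoeff_heisDilation, map_add, map_smul, vert_reeb,
    vert_single_castSucc]
  module

theorem det_leftMulLinear (x : Heis n) : (leftMulLinear x).det = 1 := by
  have hshear : (leftMulLinear x : Heis n →ₗ[ℝ] Heis n) =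
      LinearMap.transvection (liouville x : Heis n →ₗ[ℝ] ℝ) (reeb n) :=
    LinearMap.ext fun v ↦ by simp [leftMulLinear, LinearMap.transvection.apply]
  rw [ContinuousLinearMap.det, hshear, LinearMap.transvection.det]
  simp [liouville_reeb]

theorem det_heisDilation (t : ℝ) :
    (heisDilation t : Heis n →L[ℝ] Heis n).det = t ^ (2 * n + 2) := by
  have hstretch : ((heisDilation t : Heis n →L[ℝ] Heis n) : Heis n →ₗ[ℝ] Heis n) =
      t • LinearMap.transvection ((t - 1) • vert n : Heis n →L[ℝ] ℝ).toLinearMap (reeb n) :=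
    LinearMap.ext fun v ↦ by simp [heisDilation, LinearMap.transvection.apply]
  rw [ContinuousLinearMap.det, hstretch, LinearMap.det_smul, LinearMap.transvection.det]
  simp [vert_reeb]
  ring

theorem heisMul_heisDilation_zero (x y : Heis n) : heisMul x (heisDilation 0 y) = x := by
  simp [heisMul, heisDilation]

theorem hasFDerivAt_heisMul_heisDilation (x y : Heis n) (t : ℝ) :
    HasFDerivAt (fun y ↦ heisMul x (heisDilation t y)) (leftMulLinear x ∘L heisDilation t) y :=
  (leftMulLinear x ∘L heisDilation t).hasFDerivAt.const_add x

theorem contDiff_heisMul_heisDilation (x : Heis n) (t : ℝ) :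
    ContDiff ℝ ∞ fun y ↦ heisMul x (heisDilation t y) :=
  contDiff_const.add (leftMulLinear x ∘L heisDilation t).contDiff

theorem injective_heisMul_heisDilation (x : Heis n) {t : ℝ} (ht : t ≠ 0) :
    Injective fun y ↦ heisMul x (heisDilation t y) := by
  have hinj : ∀ L : Heis n →L[ℝ] Heis n, L.det ≠ 0 → Injective L := fun L hL ↦
    (LinearMap.equivOfDetNeZero L.toLinearMap hL).injective
  have hmul : Injective (leftMulLinear x) := hinj _ (by simp [det_leftMulLinear])
  have hdil : Injective (heisDilation t : Heis n →L[ℝ] Heis n) :=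
    hinj _ (by rw [det_heisDilation]; exact pow_ne_zero _ ht)
  exact (add_right_injective x).comp (hmul.comp hdil)

theorem continuous_heisMul_heisDilation :
    Continuous fun p : Heis n × ℝ × Heis n ↦ heisMul p.1 (heisDilation p.2.1 p.2.2) := by
  simp only [heisMul, leftMulLinear_apply, heisDilation_apply, liouville_apply]
  fun_prop

theorem sum_smul_Xvec (x y : Heis n) :
    ∑ j : Fin (2 * n), y j.castSucc • Xvec n j x = y + (liouville x y - vert n y) • reeb n := by
  have hy : ∑ j : Fin (2 * n), y j.castSucc • (Pi.single j.castSucc 1 : Heis n) =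
      y - vert n y • reeb n := by
    refine eq_sub_of_add_eq ?_
    conv_rhs => rw [pi_eq_sum_univ' y, Fin.sum_univ_castSucc]
    simp only [vert, reeb, ContinuousLinearMap.proj_apply]
  simp only [Xvec_eq, smul_add, smul_smul, Finset.sum_add_distrib, ← Finset.sum_smul,
    liouville_apply, mul_comm (reebCoeff _ _ _), hy]
  module

theorem hasDerivAt_heisDilation (t : ℝ) (y : Heis n) :
    HasDerivAt (fun t ↦ heisDilation t y) (∑ j : Fin (2 * n),
      y j.castSucc • Xvec n j (heisDilation t y) + (t * dilationReebSpeed y) • reeb n) t := by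
  have hquad : HasDerivAt (fun t : ℝ ↦ t * (t - 1) * vert n y) ((2 * t - 1) * vert n y) t :=
    (((hasDerivAt_id t).mul ((hasDerivAt_id t).sub_const 1)).mul_const _).congr_deriv
      (by simp only [id_eq]; ring)
  have hliouville : liouville (heisDilation t y) y = t * liouville y y := by
    simp only [liouville_apply, reebCoeff_heisDilation, Finset.mul_sum, mul_assoc]
  refine ((((hasDerivAt_id t).smul_const y).fun_add (hquad.smul_const (reeb n))).congr_deriv
    ?_).congr_of_eventuallyEq (.of_forall fun t ↦ heisDilation_apply t y)
  rw [sum_smul_Xvec, hliouville, dilationReebSpeed]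
  module

theorem hasDerivAt_heisMul_heisDilation (x : Heis n) (t : ℝ) (y : Heis n) :
    HasDerivAt (fun t ↦ heisMul x (heisDilation t y)) (∑ j : Fin (2 * n),
      y j.castSucc • Xvec n j (heisMul x (heisDilation t y))
        + (t * dilationReebSpeed y) • reeb n) t := by
  refine (((leftMulLinear x).hasFDerivAt.comp_hasDerivAt t
    (hasDerivAt_heisDilation t y)).const_add x).congr_deriv ?_
  simp only [map_add, map_sum, map_smul, leftMulLinear_Xvec, leftMulLinear_reeb]

theorem contDiff_dilationReebSpeed : ContDiff ℝ ∞ (dilationReebSpeed (n := n)) := by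
  simp only [funext_iff.2 fun x : Heis n ↦ show dilationReebSpeed x = 2 * vert n x
    - ∑ j : Fin (2 * n), reebCoeff n j x * x j.castSucc by rw [dilationReebSpeed, liouville_apply]]
  fun_prop

end Geometry

section HorizontalCalculus

variable {n : ℕ}

/-- The index of the field `X_i`, for `i < n`. -/
def xIndex (i : Fin n) : Fin (2 * n) := ⟨i, by omega⟩

/-- The index of the field `X_{n+i}` conjugate to `X_i`, for `i < n`. -/
def yIndex (i : Fin n) : Fin (2 * n) := ⟨n + i, by omega⟩

theorem hasFDerivAt_Xvec (j : Fin (2 * n)) (x : Heis n) :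
    HasFDerivAt (Xvec n j) ((reebCoeff n j).smulRight (reeb n)) x :=
  (((reebCoeff n j).smulRight (reeb n)).hasFDerivAt.const_add _).congr_of_eventuallyEq
    (.of_forall fun x ↦ Xvec_eq j x)

theorem contDiff_Xvec (j : Fin (2 * n)) : ContDiff ℝ ∞ (Xvec n j) := by
  rw [funext (Xvec_eq j)]
  fun_prop

theorem contDiff_hDeriv (j : Fin (2 * n)) {g : Heis n → E} (hg : ContDiff ℝ ∞ g) :
    ContDiff ℝ ∞ (hDeriv n j g) :=
  (hg.fderiv_right (by simp)).clm_apply (contDiff_Xvec j)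

theorem contDiff_XI (J : List (Fin (2 * n))) {g : Heis n → E} (hg : ContDiff ℝ ∞ g) :
    ContDiff ℝ ∞ (XI n J g) := by
  induction J with
  | nil => exact hg
  | cons j J ih => exact contDiff_hDeriv j ih

theorem XI_append (J I : List (Fin (2 * n))) (g : Heis n → E) :
    XI n (J ++ I) g = XI n J (XI n I g) := by
  induction J with
  | nil => rfl
  | cons j J ih => exact congrArg (hDeriv n j) ih

theorem XI_congr {f g : Heis n → E} {x : Heis n} (h : f =ᶠ[𝓝 x] g) (J : List (Fin (2 * n))) :
    XI n J f =ᶠ[𝓝 x] XI n J g := by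
  induction J with
  | nil => exact h
  | cons j J ih => exact ih.fderiv.mono fun y hy ↦ DFunLike.congr_fun hy (Xvec n j y)

theorem hDeriv_eq (j : Fin (2 * n)) (g : Heis n → E) (x : Heis n) :
    hDeriv n j g x =
      fderiv ℝ g x (Pi.single j.castSucc 1) + reebCoeff n j x • fderiv ℝ g x (reeb n) := by
  rw [hDeriv, Xvec_eq, map_add, map_smul]

theorem hDeriv_smul (j : Fin (2 * n)) {ψ : Heis n → ℝ} {u : Heis n → E} {x : Heis n}
    (hψ : DifferentiableAt ℝ ψ x) (hu : DifferentiableAt ℝ u x) :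
    hDeriv n j (fun y ↦ ψ y • u y) x = ψ x • hDeriv n j u x + hDeriv n j ψ x • u x := by
  simp [hDeriv, fderiv_fun_smul hψ hu]

theorem tsupport_hDeriv_subset (j : Fin (2 * n)) (g : Heis n → E) :
    tsupport (hDeriv n j g) ⊆ tsupport g := by
  refine closure_minimal (fun x hx ↦ support_fderiv_subset ℝ fun h ↦ hx ?_) isClosed_closure
  rw [hDeriv, h, zero_apply]

theorem hasCompactSupport_hDeriv (j : Fin (2 * n)) {g : Heis n → E} (hg : HasCompactSupport g) :
    HasCompactSupport (hDeriv n j g) :=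
  hg.of_isClosed_subset isClosed_closure (tsupport_hDeriv_subset j g)

theorem hDeriv_comp_heisMul_heisDilation (j : Fin (2 * n)) (x : Heis n) (t : ℝ) {g : Heis n → E}
    (hg : Differentiable ℝ g) (y : Heis n) :
    hDeriv n j (fun y ↦ g (heisMul x (heisDilation t y))) y =
      t • hDeriv n j g (heisMul x (heisDilation t y)) := by
  have hchain := (hg _).hasFDerivAt.comp y (hasFDerivAt_heisMul_heisDilation x y t)
  rw [hDeriv, hDeriv, show fderiv ℝ (fun y ↦ g (heisMul x (heisDilation t y))) y = _ from
    hchain.fderiv]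
  simp only [ContinuousLinearMap.comp_apply, heisDilation_Xvec, map_smul, leftMulLinear_Xvec]

theorem lieBracket_Xvec_yIndex_xIndex (i : Fin n) (x : Heis n) :
    VectorField.lieBracket ℝ (Xvec n (yIndex i)) (Xvec n (xIndex i)) x = reeb n := by
  have hx : reebCoeff n (xIndex i) (Xvec n (yIndex i) x) = 1 := by
    rw [Xvec_eq, map_add, map_smul, reebCoeff_reeb]
    simp [reebCoeff, xIndex, yIndex]
  have hy : reebCoeff n (yIndex i) = 0 := dif_neg (by simp [yIndex])
  simp [VectorField.lieBracket, (hasFDerivAt_Xvec _ x).fderiv, hx, hy]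

theorem T0Deriv_eq_commutator (i : Fin n) {g : Heis n → E} (hg : ContDiff ℝ 2 g) (x : Heis n) :
    T0Deriv n g x = hDeriv n (yIndex i) (hDeriv n (xIndex i) g) x -
      hDeriv n (xIndex i) (hDeriv n (yIndex i) g) x := by
  have h := VectorField.fderiv_apply_lieBracket hg.contDiffAt (by simp)
    (hasFDerivAt_Xvec (xIndex i) x).differentiableAt
    (hasFDerivAt_Xvec (yIndex i) x).differentiableAt
  rwa [lieBracket_Xvec_yIndex_xIndex] at h

end HorizontalCalculus

section IntegrationByParts

theorem integral_fderiv_eq_zero {V : Type*} [NormedAddCommGroup V] [NormedSpace ℝ V]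
    [FiniteDimensional ℝ V] [MeasurableSpace V] [BorelSpace V] {μ : Measure V} [μ.IsAddHaarMeasure]
    {w : V → E} (hw : ContDiff ℝ 1 w) (hwc : HasCompactSupport w) (v : V) :
    ∫ y, fderiv ℝ w y v ∂μ = 0 := by
  have hint : Integrable (fun y ↦ fderiv ℝ w y v) μ :=
    ((hw.continuous_fderiv one_ne_zero).clm_apply continuous_const).integrable_of_hasCompactSupport
      (hwc.fderiv_apply ℝ v)
  simpa using integral_smul_fderiv_eq_neg_fderiv_smul_of_integrable (μ := μ) (v := v)
    (f := fun _ ↦ (1 : ℝ)) (g := w) (by simp) (by simpa using hint)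
    (by simpa using hw.continuous.integrable_of_hasCompactSupport hwc) (by simp)
    fun y _ ↦ hw.differentiable one_ne_zero y

variable {n : ℕ}

theorem hDeriv_eq_divergence (j : Fin (2 * n)) {w : Heis n → E} (hw : Differentiable ℝ w)
    (y : Heis n) :
    hDeriv n j w y = fderiv ℝ w y (Pi.single j.castSucc 1) +
      fderiv ℝ (fun y ↦ reebCoeff n j y • w y) y (reeb n) := by
  rw [hDeriv_eq, fderiv_fun_smul (reebCoeff n j).differentiableAt (hw y)]
  simp [reebCoeff_reeb]

theorem integral_hDeriv_eq_zero (j : Fin (2 * n)) {w : Heis n → E} (hw : ContDiff ℝ 1 w)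
    (hwc : HasCompactSupport w) : ∫ y, hDeriv n j w y = 0 := by
  have hint : ∀ {u : Heis n → E}, ContDiff ℝ 1 u → HasCompactSupport u → ∀ v,
      Integrable fun y ↦ fderiv ℝ u y v := fun hu huc v ↦
    ((hu.continuous_fderiv one_ne_zero).clm_apply continuous_const).integrable_of_hasCompactSupport
      (huc.fderiv_apply ℝ v)
  have haw : ContDiff ℝ 1 fun y ↦ reebCoeff n j y • w y := (reebCoeff n j).contDiff.smul hw
  have hawc : HasCompactSupport fun y ↦ reebCoeff n j y • w y := hwc.smul_left
  simp only [hDeriv_eq_divergence j (hw.differentiable one_ne_zero)]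
  rw [integral_add (hint hw hwc _) (hint haw hawc _), integral_fderiv_eq_zero hw hwc,
    integral_fderiv_eq_zero haw hawc, add_zero]

theorem integral_smul_hDeriv (j : Fin (2 * n)) {ψ : Heis n → ℝ} {u : Heis n → E}
    (hψ : ContDiff ℝ ∞ ψ) (hψc : HasCompactSupport ψ) (hu : ContDiff ℝ ∞ u) :
    ∫ y, ψ y • hDeriv n j u y = -∫ y, hDeriv n j ψ y • u y := by
  have hψu : ContDiff ℝ ∞ fun y ↦ ψ y • u y := hψ.smul hu
  have hzero := integral_hDeriv_eq_zero j (hψu.of_le (mod_cast le_top)) hψc.smul_right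
  simp only [fun y ↦ hDeriv_smul j (hψ.differentiable (by simp) y)
    (hu.differentiable (by simp) y)] at hzero
  rw [integral_add] at hzero
  · exact eq_neg_of_add_eq_zero_left hzero
  · exact (hψ.continuous.smul (contDiff_hDeriv j hu).continuous).integrable_of_hasCompactSupport
      hψc.smul_right
  · exact ((contDiff_hDeriv j hψ).continuous.smul hu.continuous).integrable_of_hasCompactSupport
      (hasCompactSupport_hDeriv j hψc).smul_right

end IntegrationByParts

section Weights

variable {n : ℕ}

/-- The weight against which `X_j g` has to be averaged in the `t`-derivative of the average of `g`
with weight `φ`; the last two terms, present only if `j` is the index of `Y_i` or `X_i`, come from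
the Reeb component of the velocity after writing `T = [Y_i, X_i]` and integrating by parts. -/
def derivWeight (i : Fin n) (j : Fin (2 * n)) (φ : Heis n → ℝ) (y : Heis n) : ℝ :=
  y j.castSucc * φ y
    + (Pi.single (yIndex i) 1 : Fin (2 * n) → ℝ) j *
      hDeriv n (xIndex i) (fun z ↦ dilationReebSpeed z * φ z) y
    - (Pi.single (xIndex i) 1 : Fin (2 * n) → ℝ) j *
      hDeriv n (yIndex i) (fun z ↦ dilationReebSpeed z * φ z) y

/-- The weight obtained from `φ` by applying `derivWeight i j` successively for the entries `j` of
a multi-index, the last entry first. -/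
def iterDerivWeight (i : Fin n) : List (Fin (2 * n)) → (Heis n → ℝ) → Heis n → ℝ
  | [], φ => φ
  | j :: J, φ => derivWeight i j (iterDerivWeight i J φ)

theorem contDiff_derivWeight (i : Fin n) (j : Fin (2 * n)) {φ : Heis n → ℝ} (hφ : ContDiff ℝ ∞ φ) :
    ContDiff ℝ ∞ (derivWeight i j φ) := by
  have hcφ := contDiff_dilationReebSpeed.mul hφ
  exact (((contDiff_apply ℝ ℝ j.castSucc).mul hφ).add
    (contDiff_const.mul (contDiff_hDeriv _ hcφ))).sub (contDiff_const.mul (contDiff_hDeriv _ hcφ))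

theorem tsupport_derivWeight_subset (i : Fin n) (j : Fin (2 * n)) (φ : Heis n → ℝ) :
    tsupport (derivWeight i j φ) ⊆ tsupport φ := by
  have hcφ : ∀ l, tsupport (hDeriv n l fun z ↦ dilationReebSpeed z * φ z) ⊆ tsupport φ :=
    fun l ↦ (tsupport_hDeriv_subset l _).trans (tsupport_mul_subset_right (f := dilationReebSpeed))
  refine closure_minimal (fun y hy ↦ ?_) isClosed_closure
  contrapose! hy
  simp [derivWeight, image_eq_zero_of_notMem_tsupport hy,
    image_eq_zero_of_notMem_tsupport fun h ↦ hy (hcφ _ h)]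

theorem contDiff_iterDerivWeight (i : Fin n) (J : List (Fin (2 * n))) {φ : Heis n → ℝ}
    (hφ : ContDiff ℝ ∞ φ) : ContDiff ℝ ∞ (iterDerivWeight i J φ) := by
  induction J with
  | nil => exact hφ
  | cons j J ih => exact contDiff_derivWeight i j ih

theorem tsupport_iterDerivWeight_subset (i : Fin n) (J : List (Fin (2 * n))) (φ : Heis n → ℝ) :
    tsupport (iterDerivWeight i J φ) ⊆ tsupport φ := by
  induction J with
  | nil => exact Subset.rfl
  | cons j J ih => exact (tsupport_derivWeight_subset i j _).trans ih

end Weights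

section Average

variable {n : ℕ}

/-- The average of `g` around `x`, at scale `t`, over the Heisenberg group with weight `φ`. -/
def heisAverage (φ : Heis n → ℝ) (g : Heis n → E) (x : Heis n) (t : ℝ) : E :=
  ∫ y, φ y • g (heisMul x (heisDilation t y))

theorem hasDerivAt_integral_smul {V : Type*} [TopologicalSpace V] [MeasurableSpace V]
    [OpensMeasurableSpace V] {μ : Measure V} [IsFiniteMeasureOnCompacts μ] {φ : V → ℝ}
    (hφ : Continuous φ) (hφc : HasCompactSupport φ) {F F' : ℝ → V → E}
    (hF : ∀ t, Continuous (F t)) (hF' : Continuous (uncurry F'))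
    (hderiv : ∀ t y, HasDerivAt (fun t ↦ F t y) (F' t y) t) (t : ℝ) :
    HasDerivAt (fun t ↦ ∫ y, φ y • F t y ∂μ) (∫ y, φ y • F' t y ∂μ) t := by
  have hφF : ∀ {G : V → E}, Continuous G → Integrable (fun y ↦ φ y • G y) μ := fun hG ↦
    (hφ.smul hG).integrable_of_hasCompactSupport hφc.smul_right
  have hφF' : Continuous fun p : ℝ × V ↦ φ p.2 • F' p.1 p.2 := (hφ.comp continuous_snd).smul hF'
  obtain ⟨C, hC⟩ := ((isCompact_closedBall t 1).prod hφc).exists_bound_of_continuousOn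
    hφF'.continuousOn
  refine (hasDerivAt_integral_of_dominated_loc_of_deriv_le
    (bound := (tsupport φ).indicator fun _ ↦ C)
    (closedBall_mem_nhds t one_pos) (.of_forall fun s ↦ (hφF (hF s)).aestronglyMeasurable)
    (hφF (hF t)) (hφF (hF'.comp (Continuous.prodMk_right t))).aestronglyMeasurable
    (.of_forall fun y s hs ↦ ?_) ?_ (.of_forall fun y s _ ↦ (hderiv s y).const_smul (φ y))).2
  · by_cases hy : y ∈ tsupport φ
    · rw [indicator_of_mem hy]
      exact hC (s, y) ⟨hs, hy⟩
    · rw [indicator_of_notMem hy, image_eq_zero_of_notMem_tsupport hy, zero_smul, norm_zero]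
  · rw [integrable_indicator_iff (isClosed_tsupport φ).measurableSet]
    exact integrableOn_const hφc.isCompact.measure_lt_top.ne

theorem integrable_heisAverage {φ : Heis n → ℝ} (hφ : Continuous φ) (hφc : HasCompactSupport φ)
    {g : Heis n → E} (hg : Continuous g) (x : Heis n) (t : ℝ) :
    Integrable fun y ↦ φ y • g (heisMul x (heisDilation t y)) :=
  (hφ.smul (hg.comp (contDiff_heisMul_heisDilation x t).continuous)).integrable_of_hasCompactSupport
    hφc.smul_right

theorem smul_heisAverage_hDeriv (j : Fin (2 * n)) {φ : Heis n → ℝ} (hφ : ContDiff ℝ ∞ φ)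
    (hφc : HasCompactSupport φ) {g : Heis n → E} (hg : ContDiff ℝ ∞ g) (x : Heis n) (t : ℝ) :
    t • heisAverage φ (hDeriv n j g) x t = -heisAverage (hDeriv n j φ) g x t := by
  have hibp := integral_smul_hDeriv j hφ hφc (hg.comp (contDiff_heisMul_heisDilation x t))
  simp only [comp_def, hDeriv_comp_heisMul_heisDilation j x t (hg.differentiable (by simp)),
    smul_comm _ t] at hibp
  rw [heisAverage, ← integral_smul, hibp, heisAverage]

theorem heisAverage_derivWeight (i : Fin n) (j : Fin (2 * n)) {φ : Heis n → ℝ}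
    (hφ : ContDiff ℝ ∞ φ) (hφc : HasCompactSupport φ) {g : Heis n → E} (hg : Continuous g)
    (x : Heis n) (t : ℝ) :
    heisAverage (derivWeight i j φ) g x t = heisAverage (fun y ↦ y j.castSucc * φ y) g x t
      + (Pi.single (yIndex i) 1 : Fin (2 * n) → ℝ) j •
        heisAverage (hDeriv n (xIndex i) fun z ↦ dilationReebSpeed z * φ z) g x t
      - (Pi.single (xIndex i) 1 : Fin (2 * n) → ℝ) j •
        heisAverage (hDeriv n (yIndex i) fun z ↦ dilationReebSpeed z * φ z) g x t := by
  have hcoord : Integrable fun y ↦ (y j.castSucc * φ y) • g (heisMul x (heisDilation t y)) :=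
    integrable_heisAverage ((continuous_apply _).mul hφ.continuous) hφc.mul_left hg x t
  have hreeb : ∀ (c : ℝ) (l), Integrable fun y ↦ c •
      hDeriv n l (fun z ↦ dilationReebSpeed z * φ z) y • g (heisMul x (heisDilation t y)) :=
    fun c l ↦ (integrable_heisAverage (contDiff_hDeriv l
      (contDiff_dilationReebSpeed.mul hφ)).continuous
      (hasCompactSupport_hDeriv l hφc.mul_left) hg x t).smul c
  simp only [heisAverage, ← integral_smul]
  rw [← integral_add hcoord (hreeb _ _), ← integral_sub (hcoord.fun_add (hreeb _ _)) (hreeb _ _)]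
  simp only [derivWeight, sub_smul, add_smul, smul_smul]

theorem smul_heisAverage_T0Deriv (i : Fin n) {ψ : Heis n → ℝ} (hψ : ContDiff ℝ ∞ ψ)
    (hψc : HasCompactSupport ψ) {g : Heis n → E} (hg : ContDiff ℝ ∞ g) (x : Heis n) (t : ℝ) :
    t • heisAverage ψ (T0Deriv n g) x t =
      heisAverage (hDeriv n (xIndex i) ψ) (hDeriv n (yIndex i) g) x t -
        heisAverage (hDeriv n (yIndex i) ψ) (hDeriv n (xIndex i) g) x t := by
  have hXg : ∀ j, ContDiff ℝ ∞ (hDeriv n j g) := fun j ↦ contDiff_hDeriv j hg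
  have hcomm : heisAverage ψ (T0Deriv n g) x t =
      heisAverage ψ (hDeriv n (yIndex i) (hDeriv n (xIndex i) g)) x t
      - heisAverage ψ (hDeriv n (xIndex i) (hDeriv n (yIndex i) g)) x t := by
    have hint : ∀ j l, Integrable fun y ↦
        ψ y • hDeriv n j (hDeriv n l g) (heisMul x (heisDilation t y)) := fun j l ↦
      integrable_heisAverage hψ.continuous hψc (contDiff_hDeriv j (hXg l)).continuous x t
    simp only [heisAverage]
    rw [← integral_sub (hint _ _) (hint _ _)]
    simp only [T0Deriv_eq_commutator i (contDiff_infty.1 hg 2), smul_sub]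
  rw [hcomm, smul_sub, smul_heisAverage_hDeriv _ hψ hψc (hXg _),
    smul_heisAverage_hDeriv _ hψ hψc (hXg _)]
  abel

theorem hasDerivAt_heisAverage_velocity {φ : Heis n → ℝ} (hφ : Continuous φ)
    (hφc : HasCompactSupport φ) {g : Heis n → E} (hg : ContDiff ℝ 1 g) (x : Heis n) (t : ℝ) :
    HasDerivAt (heisAverage φ g x)
      (∑ j, heisAverage (fun y ↦ y j.castSucc * φ y) (hDeriv n j g) x t +
        t • heisAverage (fun y ↦ dilationReebSpeed y * φ y) (T0Deriv n g) x t) t := by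
  have hP : Continuous fun p : ℝ × Heis n ↦ heisMul x (heisDilation p.1 p.2) :=
    continuous_heisMul_heisDilation.comp (Continuous.prodMk_right x)
  have hDg : Continuous (fderiv ℝ g) := hg.continuous_fderiv one_ne_zero
  have hc := contDiff_dilationReebSpeed (n := n).continuous
  have hX : ∀ j, Continuous (hDeriv n j g) := fun j ↦ hDg.clm_apply (contDiff_Xvec j).continuous
  have hT : Continuous (T0Deriv n g) := hDg.clm_apply continuous_const
  refine (hasDerivAt_integral_smul hφ hφc (F := fun t y ↦ g (heisMul x (heisDilation t y)))
    (F' := fun t y ↦ ∑ j : Fin (2 * n), y j.castSucc • hDeriv n j g (heisMul x (heisDilation t y))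
      + (t * dilationReebSpeed y) • T0Deriv n g (heisMul x (heisDilation t y)))
    (fun t ↦ hg.continuous.comp (contDiff_heisMul_heisDilation x t).continuous) ?_
    (fun t y ↦ ?_) t).congr_deriv ?_
  · have hcoord : ∀ j : Fin (2 * n), Continuous fun p : ℝ × Heis n ↦ p.2 j.castSucc :=
      fun j ↦ (continuous_apply _).comp continuous_snd
    exact (continuous_finsetSum _ fun j _ ↦ (hcoord j).smul ((hX j).comp hP)).add
      ((continuous_fst.mul (hc.comp continuous_snd)).smul (hT.comp hP))
  · refine ((hg.differentiable one_ne_zero _).hasFDerivAt.comp_hasDerivAt t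
      (hasDerivAt_heisMul_heisDilation x t y)).congr_deriv ?_
    simp only [map_add, map_sum, map_smul]
    rfl
  · have hint : ∀ {a : Heis n → ℝ} {u : Heis n → E}, Continuous a → Continuous u →
        Integrable fun y ↦ (a y * φ y) • u (heisMul x (heisDilation t y)) := fun ha hu ↦
      integrable_heisAverage (ha.mul hφ) hφc.mul_left hu x t
    simp only [heisAverage]
    rw [← integral_smul, ← integral_finsetSum _ fun j _ ↦ hint (continuous_apply j.castSucc) (hX j),
      ← integral_add (integrable_finsetSum _ fun j _ ↦ hint (continuous_apply j.castSucc) (hX j))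
        ((hint hc hT).fun_smul t)]
    simp only [smul_add, Finset.smul_sum, smul_smul, mul_comm, mul_left_comm]

theorem hasDerivAt_heisAverage (i : Fin n) {φ : Heis n → ℝ} (hφ : ContDiff ℝ ∞ φ)
    (hφc : HasCompactSupport φ) {g : Heis n → E} (hg : ContDiff ℝ ∞ g) (x : Heis n) (t : ℝ) :
    HasDerivAt (heisAverage φ g x)
      (∑ j, heisAverage (derivWeight i j φ) (hDeriv n j g) x t) t := by
  refine (hasDerivAt_heisAverage_velocity hφ.continuous hφc (contDiff_infty.1 hg 1) x t
    ).congr_deriv ?_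
  rw [smul_heisAverage_T0Deriv i (contDiff_dilationReebSpeed.mul hφ) hφc.mul_left hg]
  simp only [heisAverage_derivWeight i _ hφ hφc (contDiff_hDeriv _ hg).continuous,
    Finset.sum_add_distrib, Finset.sum_sub_distrib, Pi.single_apply, ite_smul, one_smul, zero_smul,
    Finset.sum_ite_eq', Finset.mem_univ, if_true, add_sub_assoc]

theorem hasDerivAt_sum_heisAverage (i : Fin n) {φ : Heis n → ℝ} (hφ : ContDiff ℝ ∞ φ)
    (hφc : HasCompactSupport φ) {g : Heis n → E} (hg : ContDiff ℝ ∞ g) (x : Heis n) (m : ℕ)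
    (t : ℝ) :
    HasDerivAt (fun t ↦ ∑ J : Fin m → Fin (2 * n),
        heisAverage (iterDerivWeight i (List.ofFn J) φ) (XI n (List.ofFn J) g) x t)
      (∑ J : Fin (m + 1) → Fin (2 * n),
        heisAverage (iterDerivWeight i (List.ofFn J) φ) (XI n (List.ofFn J) g) x t) t := by
  refine (HasDerivAt.fun_sum fun J _ ↦ hasDerivAt_heisAverage i
    (contDiff_iterDerivWeight i (List.ofFn J) hφ) (hφc.of_isClosed_subset isClosed_closure
      (tsupport_iterDerivWeight_subset i (List.ofFn J) φ))
    (contDiff_XI (List.ofFn J) hg) x t).congr_deriv ?_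
  rw [← (Fin.consEquiv fun _ ↦ Fin (2 * n)).sum_comp, Fintype.sum_prod_type_right]
  refine Finset.sum_congr rfl fun J _ ↦ Finset.sum_congr rfl fun j _ ↦ ?_
  rw [show Fin.consEquiv (fun _ ↦ Fin (2 * n)) (j, J) = Fin.cons j J from rfl, List.ofFn_cons]
  rfl

theorem iteratedDeriv_heisAverage (i : Fin n) {φ : Heis n → ℝ} (hφ : ContDiff ℝ ∞ φ)
    (hφc : HasCompactSupport φ) {g : Heis n → E} (hg : ContDiff ℝ ∞ g) (x : Heis n) (m : ℕ) :
    iteratedDeriv m (heisAverage φ g x) = fun t ↦ ∑ J : Fin m → Fin (2 * n),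
      heisAverage (iterDerivWeight i (List.ofFn J) φ) (XI n (List.ofFn J) g) x t := by
  induction m with
  | zero => simp [iterDerivWeight, XI]
  | succ m ih =>
    rw [iteratedDeriv_succ, ih]
    exact funext fun t ↦ (hasDerivAt_sum_heisAverage i hφ hφc hg x m t).deriv

theorem contDiff_heisAverage (i : Fin n) {φ : Heis n → ℝ} (hφ : ContDiff ℝ ∞ φ)
    (hφc : HasCompactSupport φ) {g : Heis n → E} (hg : ContDiff ℝ ∞ g) (x : Heis n) :
    ContDiff ℝ ∞ (heisAverage φ g x) := by
  refine contDiff_of_differentiable_iteratedDeriv fun m _ t ↦ ?_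
  rw [iteratedDeriv_heisAverage i hφ hφc hg x m]
  exact (hasDerivAt_sum_heisAverage i hφ hφc hg x m t).differentiableAt

end Average

section AverageBound

theorem memLp_two_restrict_of_continuous {V : Type*} [MetricSpace V]
    [MeasurableSpace V] [OpensMeasurableSpace V] {μ : Measure V} [IsFiniteMeasureOnCompacts μ]
    {K : Set V} (hK : IsCompact K) {F : Type*} [NormedAddCommGroup F] {u : V → F}
    (hu : Continuous u) : MemLp u 2 (μ.restrict K) :=
  (memLp_two_iff_integrable_sq_norm
    (hu.continuousOn.aestronglyMeasurable_of_isCompact hK hK.measurableSet)).2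
    ((hu.norm.pow 2).continuousOn.integrableOn_compact hK)

theorem norm_integral_smul_le_sqrt_mul_sqrt {α : Type*} [MeasurableSpace α] {μ : Measure α}
    {f : α → ℝ} {u : α → E} (hf : MemLp f 2 μ) (hu : MemLp u 2 μ) :
    ‖∫ y, f y • u y ∂μ‖ ≤ √(∫ y, f y ^ 2 ∂μ) * √(∫ y, ‖u y‖ ^ 2 ∂μ) := by
  have hholder := integral_mul_norm_le_Lp_mul_Lq (f := f) (g := fun y ↦ ‖u y‖)
    Real.HolderConjugate.two_two (by simpa using hf) (by simpa using hu.norm)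
  simp only [norm_norm, Real.rpow_two, ← Real.sqrt_eq_rpow] at hholder
  refine (norm_integral_le_integral_norm _).trans ?_
  simpa only [norm_smul, Real.norm_eq_abs, sq_abs] using hholder

variable {n : ℕ}

theorem setIntegral_image_heisMul_heisDilation (x : Heis n) {t : ℝ} (ht : t ≠ 0) {K : Set (Heis n)}
    (hK : MeasurableSet K) (F : Heis n → E) :
    ∫ z in (fun y ↦ heisMul x (heisDilation t y)) '' K, F z =
      t ^ (2 * n + 2) • ∫ y in K, F (heisMul x (heisDilation t y)) := by
  rw [integral_image_eq_integral_abs_det_fderiv_smul volume hK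
    (fun y _ ↦ (hasFDerivAt_heisMul_heisDilation x y t).hasFDerivWithinAt)
    (injective_heisMul_heisDilation x ht).injOn, integral_smul]
  have hdet : (leftMulLinear x ∘L heisDilation t).det = t ^ (2 * n + 2) := by
    rw [← one_mul (t ^ _), ← det_leftMulLinear x, ← det_heisDilation]
    exact LinearMap.det_comp _ _
  rw [hdet, abs_of_nonneg (Even.pow_nonneg ⟨n + 1, by ring⟩ t)]

theorem pow_mul_norm_heisAverage_le {ψ : Heis n → ℝ} (hψ : Continuous ψ) {K U : Set (Heis n)}
    (hK : IsCompact K) (hψK : tsupport ψ ⊆ K) (hU : IsCompact U) {g : Heis n → E}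
    (hg : Continuous g) {x : Heis n} {t : ℝ} (ht : 0 < t)
    (hKU : MapsTo (fun y ↦ heisMul x (heisDilation t y)) K U) :
    t ^ (n + 1) * ‖heisAverage ψ g x t‖ ≤
      √(∫ y in K, ψ y ^ 2) * √(∫ y in U, ‖g y‖ ^ 2) := by
  have hgP : Continuous fun y ↦ g (heisMul x (heisDilation t y)) :=
    hg.comp (contDiff_heisMul_heisDilation x t).continuous
  have hscale : t ^ (2 * n + 2) * ∫ y in K, ‖g (heisMul x (heisDilation t y))‖ ^ 2 ≤
      ∫ y in U, ‖g y‖ ^ 2 := by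
    rw [← smul_eq_mul, ← setIntegral_image_heisMul_heisDilation x ht.ne' hK.measurableSet
      fun y ↦ ‖g y‖ ^ 2]
    exact setIntegral_mono_set ((hg.norm.pow 2).continuousOn.integrableOn_compact hU)
      (.of_forall fun y ↦ sq_nonneg _) hKU.image_subset.eventuallyLE
  have hrestrict : heisAverage ψ g x t =
      ∫ y in K, ψ y • g (heisMul x (heisDilation t y)) := by
    refine (setIntegral_eq_integral_of_forall_compl_eq_zero fun y hy ↦ ?_).symm
    rw [image_eq_zero_of_notMem_tsupport fun h ↦ hy (hψK h), zero_smul]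
  have hpow : t ^ (n + 1) = √(t ^ (2 * n + 2)) := by
    rw [show t ^ (2 * n + 2) = (t ^ (n + 1)) ^ 2 by ring, Real.sqrt_sq (by positivity)]
  calc t ^ (n + 1) * ‖heisAverage ψ g x t‖
      ≤ t ^ (n + 1) * (√(∫ y in K, ψ y ^ 2) *
          √(∫ y in K, ‖g (heisMul x (heisDilation t y))‖ ^ 2)) := by
        rw [hrestrict]
        gcongr
        exact norm_integral_smul_le_sqrt_mul_sqrt
          (memLp_two_restrict_of_continuous hK hψ)
          (memLp_two_restrict_of_continuous hK hgP)
    _ = √(∫ y in K, ψ y ^ 2) *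
          √(t ^ (2 * n + 2) * ∫ y in K, ‖g (heisMul x (heisDilation t y))‖ ^ 2) := by
        rw [Real.sqrt_mul (by positivity), ← hpow]
        ring
    _ ≤ √(∫ y in K, ψ y ^ 2) * √(∫ y in U, ‖g y‖ ^ 2) := by gcongr

theorem exists_pow_mul_norm_iteratedDeriv_heisAverage_le (i : Fin n) {φ : Heis n → ℝ}
    (hφ : ContDiff ℝ ∞ φ) {K : Set (Heis n)} (hK : IsCompact K) (hφK : tsupport φ ⊆ K) (m : ℕ) :
    ∃ A ≥ 0, ∀ g : Heis n → E, ContDiff ℝ ∞ g → ∀ (x : Heis n) (U : Set (Heis n)), IsCompact U →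
      ∀ t > 0, MapsTo (fun y ↦ heisMul x (heisDilation t y)) K U →
      ∀ M, (∀ J : Fin m → Fin (2 * n), √(∫ y in U, ‖XI n (List.ofFn J) g y‖ ^ 2) ≤ M) →
        t ^ (n + 1) * ‖iteratedDeriv m (heisAverage φ g x) t‖ ≤ A * M := by
  refine ⟨∑ J : Fin m → Fin (2 * n), √(∫ y in K, iterDerivWeight i (List.ofFn J) φ y ^ 2),
    Finset.sum_nonneg fun J _ ↦ Real.sqrt_nonneg _, fun g hg x U hU t ht hKU M hM ↦ ?_⟩
  rw [iteratedDeriv_heisAverage i hφ (hK.of_isClosed_subset isClosed_closure hφK) hg,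
    Finset.sum_mul]
  calc t ^ (n + 1) * ‖∑ J : Fin m → Fin (2 * n),
        heisAverage (iterDerivWeight i (List.ofFn J) φ) (XI n (List.ofFn J) g) x t‖
      ≤ ∑ J : Fin m → Fin (2 * n), t ^ (n + 1) *
          ‖heisAverage (iterDerivWeight i (List.ofFn J) φ) (XI n (List.ofFn J) g) x t‖ := by
        rw [← Finset.mul_sum]
        gcongr
        exact norm_sum_le _ _
    _ ≤ ∑ J : Fin m → Fin (2 * n), √(∫ y in K, iterDerivWeight i (List.ofFn J) φ y ^ 2) * M := by
        refine Finset.sum_le_sum fun J _ ↦ ?_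
        refine (pow_mul_norm_heisAverage_le (contDiff_iterDerivWeight i _ hφ).continuous hK
          ((tsupport_iterDerivWeight_subset i _ φ).trans hφK) hU (contDiff_XI _ hg).continuous ht
          hKU).trans ?_
        gcongr
        exact hM J

end AverageBound

section Taylor

theorem norm_le_sum_norm_iteratedDeriv_add {f : ℝ → E} {s : ℕ} (hf : ContDiff ℝ (s + 1) f)
    {a b B : ℝ} (hab : a ≤ b)
    (hB : ∀ t ∈ Ico a b, (t - a) ^ s * ‖iteratedDeriv (s + 1) f t‖ ≤ B) :
    ‖f a‖ ≤ ∑ k ∈ Finset.range (s + 1), (b - a) ^ k / k.factorial * ‖iteratedDeriv k f b‖ +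
      B / s.factorial * (b - a) := by
  have hderiv : ∀ t ∈ Icc a b, HasDerivWithinAt (fun t ↦ taylorWithinEval f s univ t a)
      (((s.factorial : ℝ)⁻¹ * (a - t) ^ s) • iteratedDeriv (s + 1) f t) (Icc a b) t := by
    intro t _
    have hdiff : DifferentiableAt ℝ (iteratedDeriv s f) t :=
      hf.differentiable_iteratedDeriv s (by exact_mod_cast s.lt_succ_self) t
    rw [← iteratedDerivWithin_univ] at hdiff ⊢
    exact (hasDerivWithinAt_taylorWithinEval uniqueDiffOn_univ univ_mem (mem_univ t) Subset.rfl
      (hf.of_le (by exact_mod_cast s.le_succ)).contDiffOn hdiff.differentiableWithinAt).mono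
      (subset_univ _)
  have hbound : ∀ t ∈ Ico a b,
      ‖((s.factorial : ℝ)⁻¹ * (a - t) ^ s) • iteratedDeriv (s + 1) f t‖ ≤ B / s.factorial := by
    intro t ht
    rw [norm_smul, norm_mul, norm_inv, norm_pow, Real.norm_natCast, Real.norm_eq_abs, abs_sub_comm,
      abs_of_nonneg (sub_nonneg.2 ht.1), mul_assoc, inv_mul_eq_div]
    gcongr
    exact hB t ht
  have hremainder := norm_image_sub_le_of_norm_deriv_le_segment' hderiv hbound b ⟨hab, le_rfl⟩
  have hpoly : ‖taylorWithinEval f s univ b a‖ ≤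
      ∑ k ∈ Finset.range (s + 1), (b - a) ^ k / k.factorial * ‖iteratedDeriv k f b‖ := by
    rw [taylor_within_apply]
    refine norm_sum_le_of_le _ fun k _ ↦ le_of_eq ?_
    rw [iteratedDerivWithin_univ, norm_smul, norm_mul, norm_inv, norm_pow, Real.norm_natCast,
      Real.norm_eq_abs, abs_sub_comm, abs_of_nonneg (sub_nonneg.2 hab), inv_mul_eq_div]
  rw [taylorWithinEval_self, norm_sub_rev] at hremainder
  linarith [norm_le_norm_add_norm_sub' (f a) (taylorWithinEval f s univ b a)]

end Taylor

section Localization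

variable {n : ℕ}

theorem exists_contDiff_eventuallyEq_nhdsSet {V : Type*} [NormedAddCommGroup V] [NormedSpace ℝ V]
    [FiniteDimensional ℝ V] {K D : Set V} (hK : IsClosed K) (hD : IsOpen D) (hKD : K ⊆ D)
    {f : V → E} (hf : ContDiffOn ℝ ∞ f D) : ∃ g : V → E, ContDiff ℝ ∞ g ∧ g =ᶠ[𝓝ˢ K] f := by
  obtain ⟨χ, hzero, hone, -⟩ := exists_contMDiffMap_zero_one_nhds_of_isClosed (n := ⊤) 𝓘(ℝ, V)
    hD.isClosed_compl hK (disjoint_compl_left_iff_subset.2 hKD)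
  refine ⟨fun y ↦ χ y • f y, contDiff_iff_contDiffAt.2 fun y ↦ ?_, ?_⟩
  · by_cases hy : y ∈ D
    · exact χ.contMDiff.contDiff.contDiffAt.smul (hf.contDiffAt (hD.mem_nhds hy))
    · refine (contDiffAt_const (c := (0 : E))).congr_of_eventuallyEq ?_
      filter_upwards [eventually_nhdsSet_iff_forall.1 hzero y hy] with z hz
      rw [hz, zero_smul]
  · filter_upwards [hone] with y hy
    rw [hy, one_smul]

theorem exists_forall_mapsTo_heisMul_heisDilation {K U : Set (Heis n)} (hK : IsCompact K)
    (hKU : K ⊆ interior U) : ∃ r > 0, ∀ x ∈ K, ∀ t ∈ Ioc 0 r,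
      MapsTo (fun y ↦ heisMul x (heisDilation t y)) (closedBall 0 1) U := by
  have hcompact := hK.prod (isCompact_closedBall (0 : Heis n) 1)
  have hzero : ∀ᶠ t : ℝ in 𝓝 0, ∀ p ∈ K ×ˢ closedBall (0 : Heis n) 1,
      heisMul p.1 (heisDilation t p.2) ∈ interior U := by
    refine hcompact.eventually_forall_of_forall_eventually fun p hp ↦ ?_
    have hcont : Continuous fun q : ℝ × Heis n × Heis n ↦
        heisMul q.2.1 (heisDilation q.1 q.2.2) :=
      continuous_heisMul_heisDilation.comp
        (continuous_snd.fst.prodMk (continuous_fst.prodMk continuous_snd.snd))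
    refine hcont.continuousAt.eventually (isOpen_interior.mem_nhds ?_)
    simpa only [heisMul_heisDilation_zero] using hKU hp.1
  obtain ⟨r, hr, hball⟩ := Metric.eventually_nhds_iff_ball.1 hzero
  refine ⟨r / 2, half_pos hr, fun x hx t ht y hy ↦ interior_subset (hball t ?_ (x, y) ⟨hx, hy⟩)⟩
  rw [mem_ball_zero_iff, Real.norm_of_nonneg ht.1.le]
  linarith [ht.2]

end Localization

section FollandStein

variable {n : ℕ}

theorem hDeriv_congr_nhdsWithin {D : Set (Heis n)} (hD : IsOpen D) {x : Heis n}
    {f g : Heis n → E} (h : f =ᶠ[𝓝[D] x] g) (j : Fin (2 * n)) :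
    hDeriv n j f =ᶠ[𝓝[D] x] hDeriv n j g := by
  filter_upwards [eventually_eventually_nhdsWithin.2 h, self_mem_nhdsWithin] with y hy hyD
  rw [hD.nhdsWithin_eq hyD] at hy
  exact (XI_congr hy [j]).self_of_nhds

theorem exists_contDiffWithinAt_eventuallyEq_hDeriv {D : Set (Heis n)} (hD : IsOpen D)
    {x : Heis n} {N : ℕ} {g : Heis n → E} (hg : ContDiffWithinAt ℝ (N + 1) g D x)
    (j : Fin (2 * n)) : ∃ h, ContDiffWithinAt ℝ N h D x ∧ h =ᶠ[𝓝[D] x] hDeriv n j g := by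
  obtain ⟨u, hu, -, -, g', hg', hg'smooth⟩ :=
    (contDiffWithinAt_succ_iff_hasFDerivWithinAt' (by simp)).1 hg
  refine ⟨fun y ↦ g' y (Xvec n j y),
    hg'smooth.clm_apply ((contDiff_infty.1 (contDiff_Xvec j) N).contDiffWithinAt), ?_⟩
  filter_upwards [nhdsWithin_mono x (subset_insert x D) hu, self_mem_nhdsWithin] with y hyu hyD
  rw [hDeriv, ((hg' y hyu).hasFDerivAt (hD.mem_nhds hyD)).fderiv]

theorem exists_contDiffWithinAt_eventuallyEq_XI {D : Set (Heis n)} (hD : IsOpen D) {x : Heis n}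
    {f : Heis n → E} (hf : ContDiffWithinAt ℝ ∞ f D x) (J : List (Fin (2 * n))) (N : ℕ) :
    ∃ h, ContDiffWithinAt ℝ N h D x ∧ h =ᶠ[𝓝[D] x] XI n J f := by
  induction J generalizing N with
  | nil => exact ⟨f, hf.of_le (mod_cast le_top), .rfl⟩
  | cons j J ih =>
    obtain ⟨u, hu, huf⟩ := ih (N + 1)
    obtain ⟨h, hh, hhu⟩ := exists_contDiffWithinAt_eventuallyEq_hDeriv hD hu j
    exact ⟨h, hh, hhu.trans (hDeriv_congr_nhdsWithin hD huf j)⟩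

theorem integrableOn_sq_norm_XI {D : Set (Heis n)} (hD : IsOpen D) (hDb : IsBounded D)
    {f : Heis n → E} (hf : ContDiffOn ℝ ∞ f (closure D)) (J : List (Fin (2 * n))) :
    IntegrableOn (fun x ↦ ‖XI n J f x‖ ^ 2) D := by
  have hreg : ∀ x ∈ closure D, ∃ h, ContinuousWithinAt h D x ∧ h =ᶠ[𝓝[D] x] XI n J f :=
    fun x hx ↦ by
      obtain ⟨h, hh, heq⟩ := exists_contDiffWithinAt_eventuallyEq_XI hD
        ((hf x hx).mono subset_closure) J 0
      exact ⟨h, hh.continuousWithinAt, heq⟩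
  have hcont : ContinuousOn (XI n J f) D := fun x hx ↦ by
    obtain ⟨h, hh, heq⟩ := hreg x (subset_closure hx)
    exact hh.congr_of_eventuallyEq heq.symm (heq.symm.self_of_nhdsWithin hx)
  have hext : ContinuousOn (extendFrom D (XI n J f)) (closure D) :=
    continuousOn_extendFrom Subset.rfl fun x hx ↦ by
      obtain ⟨h, hh, heq⟩ := hreg x hx
      exact ⟨h x, hh.tendsto.congr' heq⟩
  refine (((hext.norm.pow 2).integrableOn_compact hDb.isCompact_closure).mono_set
    subset_closure).congr_fun (fun x hx ↦ ?_) hD.measurableSet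
  exact congrArg (‖·‖ ^ 2) (extendFrom_extends hcont x hx)

theorem sqrt_setIntegral_sq_norm_XI_le_fsNorm (D : Set (Heis n)) (f : Heis n → E) {s : ℕ}
    {J : List (Fin (2 * n))} (hJ : J.length ≤ s) :
    √(∫ x in D, ‖XI n J f x‖ ^ 2) ≤ fsNorm n D s f := by
  have hnonneg : ∀ J, 0 ≤ ∫ x in D, ‖XI n J f x‖ ^ 2 := fun J ↦
    integral_nonneg fun _ ↦ sq_nonneg _
  refine Real.sqrt_le_sqrt ?_
  calc ∫ x in D, ‖XI n J f x‖ ^ 2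
      = ∫ x in D, ‖XI n (List.ofFn J.get) f x‖ ^ 2 := by rw [List.ofFn_get]
    _ ≤ ∑ I : Fin J.length → Fin (2 * n), ∫ x in D, ‖XI n (List.ofFn I) f x‖ ^ 2 :=
        Finset.single_le_sum (f := fun I ↦ ∫ x in D, ‖XI n (List.ofFn I) f x‖ ^ 2)
          (fun I _ ↦ hnonneg _) (Finset.mem_univ J.get)
    _ ≤ fsNormSq n D s f :=
        Finset.single_le_sum (f := fun t ↦ ∑ I : Fin t → Fin (2 * n),
          ∫ x in D, ‖XI n (List.ofFn I) f x‖ ^ 2) (fun t _ ↦ Finset.sum_nonneg fun I _ ↦ hnonneg _)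
          (Finset.mem_range_succ_iff.2 hJ)

end FollandStein

section SobolevEstimate

variable {n : ℕ}

theorem heisAverage_zero [CompleteSpace E] (φ : Heis n → ℝ) (g : Heis n → E) (x : Heis n) :
    heisAverage φ g x 0 = (∫ y, φ y) • g x := by
  simp only [heisAverage, heisMul_heisDilation_zero, integral_smul_const]

theorem exists_norm_le_mul_of_sqrt_setIntegral_XI_le [CompleteSpace E] (i : Fin n) {r : ℝ}
    (hr : 0 < r) : ∃ C ≥ 0, ∀ g : Heis n → E, ContDiff ℝ ∞ g → ∀ (x : Heis n) (U : Set (Heis n)),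
      IsCompact U →
      (∀ t ∈ Ioc 0 r, MapsTo (fun y ↦ heisMul x (heisDilation t y)) (closedBall 0 1) U) →
      ∀ M, (∀ J, J.length ≤ n + 2 → √(∫ y in U, ‖XI n J g y‖ ^ 2) ≤ M) → ‖g x‖ ≤ C * M := by
  let b : ContDiffBump (0 : Heis n) := ⟨1 / 2, 1, by norm_num, by norm_num⟩
  set φ : Heis n → ℝ := b.normed volume with hφdef
  have hφ : ContDiff ℝ ∞ φ := b.contDiff_normed
  have hφK : tsupport φ ⊆ closedBall 0 1 := b.tsupport_normed_eq.subset
  have hφc : HasCompactSupport φ := b.hasCompactSupport_normed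
  choose A hA0 hA using exists_pow_mul_norm_iteratedDeriv_heisAverage_le (E := E) i hφ
    (isCompact_closedBall 0 1) hφK
  refine ⟨∑ m ∈ Finset.range (n + 2), r ^ m / m.factorial * (A m / r ^ (n + 1)) +
    A (n + 2) / (n + 1).factorial * r, ?_, fun g hg x U hU hKU M hM ↦ ?_⟩
  · exact add_nonneg (Finset.sum_nonneg fun m _ ↦ mul_nonneg (by positivity)
      (div_nonneg (hA0 m) (by positivity))) (mul_nonneg (div_nonneg (hA0 _) (by positivity)) hr.le)
  have hM0 : 0 ≤ M := (Real.sqrt_nonneg _).trans (hM [] (Nat.zero_le _))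
  have hderiv : ∀ t ∈ Ioc 0 r, ∀ m ≤ n + 2,
      t ^ (n + 1) * ‖iteratedDeriv m (heisAverage φ g x) t‖ ≤ A m * M := fun t ht m hm ↦
    hA m g hg x U hU t ht.1 (hKU t ht) M fun J ↦ hM _ (by rwa [List.length_ofFn])
  have htaylor := norm_le_sum_norm_iteratedDeriv_add (s := n + 1) (B := A (n + 2) * M)
    (contDiff_infty.1 (contDiff_heisAverage i hφ hφc hg x) (n + 2)) hr.le fun t ht ↦ ?_
  · rw [heisAverage_zero, hφdef, b.integral_normed, one_smul, ← hφdef, sub_zero] at htaylor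
    refine htaylor.trans ?_
    rw [add_mul, Finset.sum_mul]
    refine add_le_add (Finset.sum_le_sum fun m hm ↦ ?_) (le_of_eq (by ring))
    rw [mul_assoc, div_mul_eq_mul_div (A m)]
    gcongr
    exact (le_div_iff₀' (by positivity)).2
      (hderiv r ⟨hr, le_rfl⟩ m (Finset.mem_range.1 hm).le)
  · rcases ht.1.eq_or_lt with rfl | ht0
    · simpa using mul_nonneg (hA0 _) hM0
    · simpa only [sub_zero] using hderiv t ⟨ht0, ht.2.le⟩ (n + 2) le_rfl

theorem statement1_general [CompleteSpace E] (hn : 1 ≤ n) (k : ℕ) {D K : Set (Heis n)}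
    (hD : IsOpen D) (hK : IsCompact K) (hKD : K ⊆ D) :
    ∃ C > (0 : ℝ), ∀ f : Heis n → E, ContDiffOn ℝ ∞ f D →
      (∀ J, J.length ≤ k + n + 2 → IntegrableOn (fun y ↦ ‖XI n J f y‖ ^ 2) D) →
      ∀ I, I.length ≤ k → ∀ x ∈ K, ‖XI n I f x‖ ≤ C * fsNorm n D (k + n + 2) f := by
  obtain ⟨U, hU, hKU, hUD⟩ := exists_compact_between hK hD hKD
  obtain ⟨r, hr, hmaps⟩ := exists_forall_mapsTo_heisMul_heisDilation hK hKU
  obtain ⟨C, hC, hpoint⟩ := exists_norm_le_mul_of_sqrt_setIntegral_XI_le (E := E) ⟨0, hn⟩ hr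
  refine ⟨C + 1, by positivity, fun f hf hint I hI x hx ↦ ?_⟩
  obtain ⟨g, hg, hgf⟩ := exists_contDiff_eventuallyEq_nhdsSet hU.isClosed hD hUD hf
  have hXI : ∀ y ∈ U, ∀ J, XI n J g y = XI n J f y := fun y hy J ↦
    (XI_congr (hgf.filter_mono (nhds_le_nhdsSet hy)) J).self_of_nhds
  have hL2 : ∀ J, J.length ≤ n + 2 →
      √(∫ y in U, ‖XI n J (XI n I g) y‖ ^ 2) ≤ fsNorm n D (k + n + 2) f := fun J hJ ↦ by
    have hlen : (J ++ I).length ≤ k + n + 2 := by rw [List.length_append]; omega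
    refine (Real.sqrt_le_sqrt ?_).trans (sqrt_setIntegral_sq_norm_XI_le_fsNorm D f hlen)
    rw [← XI_append, setIntegral_congr_fun hU.measurableSet
      fun y hy ↦ congrArg (‖·‖ ^ 2) (hXI y hy (J ++ I))]
    exact setIntegral_mono_set (hint _ hlen) (.of_forall fun y ↦ sq_nonneg _) hUD.eventuallyLE
  calc ‖XI n I f x‖ = ‖XI n I g x‖ := by rw [hXI x (interior_subset (hKU hx)) I]
    _ ≤ C * fsNorm n D (k + n + 2) f :=
        hpoint _ (contDiff_XI I hg) x U hU (hmaps x hx) _ hL2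
    _ ≤ (C + 1) * fsNorm n D (k + n + 2) f :=
        mul_le_mul_of_nonneg_right (le_add_of_nonneg_right zero_le_one) (Real.sqrt_nonneg _)

end SobolevEstimate

/-- Folland–Stein Sobolev estimate: for `s = k + n + 2`,
`sup_{cl D'} |X_I f| ≤ C ‖f‖_{D,s}` for `|I| ≤ k`. -/
theorem statement1 (n m k : ℕ) (hn : 1 ≤ n)
    (D D' : Set (Fin (2*n+1) → ℝ)) (hD : IsOpen D) (hDb : IsBounded D)
    (hD' : IsOpen D') (hD'b : IsBounded D') (hsub : closure D' ⊆ D) :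
    ∃ C > (0:ℝ), ∀ f : (Fin (2*n+1) → ℝ) → (Fin m → ℝ),
      ContDiffOn ℝ (⊤:ℕ∞) f (closure D) →
      ∀ I : List (Fin (2*n)), I.length ≤ k →
      ∀ x ∈ closure D', ‖XI n I f x‖ ≤ C * fsNorm n D (k + n + 2) f := by
  obtain ⟨C, hC, hbound⟩ := statement1_general (E := Fin m → ℝ) hn k hD hD'b.isCompact_closure hsub
  exact ⟨C, hC, fun f hf ↦ hbound f (hf.mono subset_closure) fun J _ ↦
    integrableOn_sq_norm_XI hD hDb hf J⟩

end
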